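/- arXiv:1107.3002 — 3 statements merged into one kernel-verified Lean document; each statement's English description precedes it below -/
import Mathlib

section
/- Let K be a field, π a group, and φ: π → ℤ a group homomorphism which is nontrivial and whose kernel is a nontrivial subgroup. Let d ≥ 1 and let α: π → GL(d,K) be an irreducible representation whose restriction to ker φ is nontrivial (i.e. there exists γ ∈ ker φ with α(γ) ≠ id). Then the R-submodule of R^d generated by the set {(α⊗φ)(g)·v − v : g ∈ π, v ∈ R^d} is all of R^d, where R = K[t,t⁻¹]; equivalently, the zeroth twisted homology H₀ of π with coefficients in R^d via α⊗φ vanishes. -/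
open Matrix

/-- **Vanishing of the zeroth twisted homology** (Proposition 7.3 of
Friedl–Kim–Kitayama, "Poincaré duality and degrees of twisted Alexander polynomials").

Let `K` be a field, `π` a group and `φ : π → ℤ` a nontrivial group homomorphism with
nontrivial kernel.  Let `α : π → GL(d,K)` (with `d ≥ 1`) be an irreducible representation
whose restriction to `ker φ` is nontrivial.  Then the `R`-submodule of `R^d`
(`R = K[t,t⁻¹]`) generated by the elements `(α ⊗ φ)(g) · v - v` is all of `R^d`,
i.e. the zeroth twisted homology of `π` with coefficients in `R^d` via `α ⊗ φ` vanishes. -/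
theorem zeroth_twisted_homology_vanishes
    {K : Type*} [Field K] {π : Type*} [Group π]
    (φ : π → ℤ) (hφ_hom : ∀ a b : π, φ (a * b) = φ a + φ b)
    (hφ_nontrivial : ∃ g : π, φ g ≠ 0)
    (hker_nontrivial : ∃ γ : π, φ γ = 0 ∧ γ ≠ 1)
    (d : ℕ) (hd : 1 ≤ d)
    (α : π →* GL (Fin d) K)
    (hirr : ∀ W : Submodule K (Fin d → K),
      (∀ g : π, ∀ v ∈ W, (α g : Matrix (Fin d) (Fin d) K) *ᵥ v ∈ W) → W = ⊥ ∨ W = ⊤)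
    (hres : ∃ γ : π, φ γ = 0 ∧ α γ ≠ 1) :
    Submodule.span (LaurentPolynomial K)
      {x : Fin d → LaurentPolynomial K | ∃ (g : π) (v : Fin d → LaurentPolynomial K),
        x = ((LaurentPolynomial.T (φ g) : LaurentPolynomial K) •
              ((α g : Matrix (Fin d) (Fin d) K).map
                (algebraMap K (LaurentPolynomial K)))) *ᵥ v - v} = ⊤ := by
  set N := Submodule.span (LaurentPolynomial K)
    {x : Fin d → LaurentPolynomial K | ∃ (g : π) (v : Fin d → LaurentPolynomial K),
      x = ((LaurentPolynomial.T (φ g) : LaurentPolynomial K) •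
            ((α g : Matrix (Fin d) (Fin d) K).map
              (algebraMap K (LaurentPolynomial K)))) *ᵥ v - v}
  let ι : (Fin d → K) →ₗ[K] (Fin d → LaurentPolynomial K) :=
    (Algebra.linearMap K (LaurentPolynomial K)).compLeft (Fin d)
  have hι (M : Matrix (Fin d) (Fin d) K) (v : Fin d → K) :
      ι (M *ᵥ v) = M.map (algebraMap K (LaurentPolynomial K)) *ᵥ ι v := by
    ext1 i
    exact RingHom.map_mulVec (algebraMap K (LaurentPolynomial K)) M v i
  have hgen (g : π) (v : Fin d → K) :
      (LaurentPolynomial.T (φ g) : LaurentPolynomial K) •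
        ι ((α g : Matrix (Fin d) (Fin d) K) *ᵥ v) - ι v ∈ N :=
    Submodule.subset_span ⟨g, ι v, by rw [hι, smul_mulVec]⟩
  -- The constant vectors lying in `N` form a `π`-invariant subspace of `K^d`.
  let W : Submodule K (Fin d → K) := (N.restrictScalars K).comap ι
  have hW : W = ⊤ := by
    refine (hirr W fun g v hv => ?_).resolve_left fun hbot => ?_
    · have hmem := N.smul_mem (LaurentPolynomial.T (-φ g)) (N.add_mem (hgen g v) hv)
      rwa [sub_add_cancel, smul_smul, ← LaurentPolynomial.T_add, neg_add_cancel,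
        LaurentPolynomial.T_zero, one_smul] at hmem
    · obtain ⟨γ, hγ, hαγ⟩ := hres
      refine hαγ (Units.ext (Matrix.ext_of_mulVec_single fun i => ?_))
      have hmem : (α γ : Matrix (Fin d) (Fin d) K) *ᵥ Pi.single i 1 - Pi.single i 1 ∈ W := by
        have h := hgen γ (Pi.single i 1)
        rwa [hγ, LaurentPolynomial.T_zero, one_smul, ← map_sub] at h
      rw [hbot, Submodule.mem_bot, sub_eq_zero] at hmem
      rw [hmem, Units.val_one, one_mulVec]
  rw [eq_top_iff, ← (Pi.basisFun (LaurentPolynomial K) (Fin d)).span_eq, Submodule.span_le]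
  rintro _ ⟨i, rfl⟩
  have hmem : Pi.single i 1 ∈ W := hW ▸ Submodule.mem_top
  have hsingle : ι (Pi.single i 1) = Pi.basisFun (LaurentPolynomial K) (Fin d) i := by
    ext1 j
    by_cases h : j = i
    · subst h
      simp [ι]
    · simp [ι, h]
  rw [← hsingle]
  exact hmem
end

section
/- Let K be a field, π a group, φ: π → ℤ a group homomorphism, d ≥ 1, and α: π → GL(d,K) a representation. Let R = K[t,t⁻¹] and let Γ = ker φ. If the R-submodule of R^d generated by {(α⊗φ)(g)·v − v : g ∈ π, v ∈ R^d} is a proper submodule of R^d, then the K-linear span of {α(γ)·w − w : γ ∈ Γ, w ∈ K^d} is a proper K-subspace of K^d (i.e. the coinvariants of the restriction of α to Γ are nonzero). -/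
open Matrix

/-- An `A`-submodule of `A^n` containing the image of `K^n` is everything. -/
theorem Submodule.eq_top_of_forall_algebraMap_comp_mem {K A n : Type*} [CommSemiring K]
    [Semiring A] [Algebra K A] [Fintype n] (N : Submodule A (n → A))
    (hN : ∀ w : n → K, algebraMap K A ∘ w ∈ N) : N = ⊤ := by
  classical
  refine Submodule.eq_top_iff'.2 fun v => ?_
  rw [pi_eq_sum_univ' v]
  refine N.sum_mem fun i _ => N.smul_mem _ ?_
  convert hN (fun j => if i = j then 1 else 0) using 1
  ext j
  by_cases hj : i = j <;> simp [hj]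

/-- If the `R = K[t,t⁻¹]`-submodule of `R^d` generated by the elements
`(α ⊗ φ)(g) · v - v` (for `g ∈ π`, `v ∈ R^d`) is proper, then the `K`-span of
`α(γ) · w - w` (for `γ ∈ ker φ`, `w ∈ K^d`) is a proper subspace of `K^d`,
i.e. the coinvariants of the restriction of `α` to `Γ = ker φ` are nonzero. -/
theorem coinvariants_of_restriction_nonzero
    {K : Type*} [Field K] {π : Type*} [Group π]
    (φ : π → ℤ) (hφ_hom : ∀ a b : π, φ (a * b) = φ a + φ b)
    (d : ℕ) (hd : 1 ≤ d)
    (α : π →* GL (Fin d) K)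
    (h : Submodule.span (LaurentPolynomial K)
      {x : Fin d → LaurentPolynomial K | ∃ (g : π) (v : Fin d → LaurentPolynomial K),
        x = ((LaurentPolynomial.T (φ g) : LaurentPolynomial K) •
              ((α g : Matrix (Fin d) (Fin d) K).map
                (algebraMap K (LaurentPolynomial K)))) *ᵥ v - v} ≠ ⊤) :
    Submodule.span K
      {x : Fin d → K | ∃ γ : π, φ γ = 0 ∧ ∃ w : Fin d → K,
        x = (α γ : Matrix (Fin d) (Fin d) K) *ᵥ w - w} ≠ ⊤ := by
  intro htop
  refine h (Submodule.eq_top_of_forall_algebraMap_comp_mem (K := K) _ fun w => ?_)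
  have hw : w ∈ (⊤ : Submodule K (Fin d → K)) := Submodule.mem_top
  rw [← htop] at hw
  refine Submodule.span_le (p := (Submodule.restrictScalars K
    (Submodule.span (LaurentPolynomial K) _)).comap
    ((Algebra.linearMap K (LaurentPolynomial K)).compLeft (Fin d))) |>.2 ?_ hw
  rintro _ ⟨γ, hγ, u, rfl⟩
  refine Submodule.subset_span ⟨γ, algebraMap K (LaurentPolynomial K) ∘ u, ?_⟩
  ext1 i
  have hmul := RingHom.map_mulVec (algebraMap K (LaurentPolynomial K))
    (α γ : Matrix (Fin d) (Fin d) K) u i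
  rw [hγ, LaurentPolynomial.T_zero, one_smul, Pi.sub_apply, ← hmul]
  exact map_sub (algebraMap K (LaurentPolynomial K)) _ _
end

section
/- Let K be a field, V a finite-dimensional K-vector space, G a group, ρ: G → GL(V) a representation, B: V × V → K a nondegenerate bilinear form, and ρ† the B-dual representation of ρ. Let C be a finitely generated free left module over the group ring ℤ[G]. Regard the abelian group C ⊗_ℤ V as a K-vector space via the right factor, equipped with the diagonal G-action g·(c ⊗ v) = (g·c) ⊗ ρ(g)v, and let (C ⊗_ℤ V)_G denote its coinvariants, i.e. the quotient by the K-span of {g·x − x : g ∈ G, x ∈ C ⊗_ℤ V}. Let H denote the K-vector space of additive maps f: C → V satisfying f(g·c) = ρ†(g)(f(c)) for all g ∈ G, c ∈ C. Then the assignment sending f ∈ H to the functional on (C ⊗_ℤ V)_G induced by c ⊗ v ↦ B(f(c), v) is a well-defined K-linear isomorphism from H onto Hom_K((C ⊗_ℤ V)_G, K). -/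
open TensorProduct

section

variable {K V C : Type*} [Field K] [AddCommGroup V] [Module K V] [AddCommGroup C]

/-- The `K`-scalar multiplication on the abelian group `C ⊗_ℤ V`, acting through the
right factor `V`. -/
noncomputable instance tensorRightSMul : SMul K (C ⊗[ℤ] V) :=
  ⟨fun k x => (TensorProduct.comm ℤ C V).symm (k • (TensorProduct.comm ℤ C V) x)⟩

theorem tensorRightSMul_def (k : K) (x : C ⊗[ℤ] V) :
    k • x = (TensorProduct.comm ℤ C V).symm (k • (TensorProduct.comm ℤ C V) x) := rfl

/-- The abelian group `C ⊗_ℤ V` regarded as a `K`-vector space via the right factor: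
`k • (c ⊗ v) = c ⊗ (k • v)`. -/
noncomputable instance tensorRightModule : Module K (C ⊗[ℤ] V) where
  one_smul x := by rw [tensorRightSMul_def]; simp
  mul_smul a b x := by
    rw [tensorRightSMul_def, tensorRightSMul_def, tensorRightSMul_def]
    simp [mul_smul]
  smul_zero a := by rw [tensorRightSMul_def]; simp
  smul_add a x y := by
    rw [tensorRightSMul_def, tensorRightSMul_def, tensorRightSMul_def]
    simp [smul_add]
  add_smul a b x := by
    rw [tensorRightSMul_def, tensorRightSMul_def, tensorRightSMul_def]
    simp [add_smul]
  zero_smul x := by rw [tensorRightSMul_def]; simp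

end

/-- The `K`-vector space of additive maps `f : C → V` satisfying
`f (g • c) = ρd g (f c)` for all `g : G`, `c : C`. -/
noncomputable def equivariantMaps {K V G : Type*} [Field K] [AddCommGroup V] [Module K V]
    [Group G] (ρd : G →* (V ≃ₗ[K] V))
    (C : Type*) [AddCommGroup C] [Module (MonoidAlgebra ℤ G) C] :
    Submodule K (C →+ V) where
  carrier := {f | ∀ (g : G) (c : C), f ((MonoidAlgebra.of ℤ G g) • c) = ρd g (f c)}
  add_mem' := by
    intro f₁ f₂ h₁ h₂ g c
    simp only [AddMonoidHom.add_apply, h₁ g c, h₂ g c, map_add]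
  zero_mem' := by
    intro g c
    simp
  smul_mem' := by
    intro k f hf g c
    simp only [AddMonoidHom.smul_apply, hf g c, map_smul]

/-- The diagonal `G`-action on `C ⊗_ℤ V`: `g • (c ⊗ v) = (g • c) ⊗ (ρ g v)`,
as a `ℤ`-linear endomorphism. -/
noncomputable def diagAction {K V G : Type*} [Field K] [AddCommGroup V] [Module K V]
    [Group G] (ρ : G →* (V ≃ₗ[K] V))
    (C : Type*) [AddCommGroup C] [Module (MonoidAlgebra ℤ G) C] (g : G) :
    C ⊗[ℤ] V →ₗ[ℤ] C ⊗[ℤ] V :=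
  TensorProduct.map
    (DistribMulAction.toAddMonoidHom C (MonoidAlgebra.of ℤ G g)).toIntLinearMap
    ((ρ g).toLinearMap.toAddMonoidHom.toIntLinearMap)

section

variable {K V C : Type*} [Field K] [AddCommGroup V] [Module K V] [AddCommGroup C]

theorem tensorRight_smul_tmul (k : K) (c : C) (v : V) :
    k • (c ⊗ₜ[ℤ] v) = c ⊗ₜ[ℤ] (k • v) := by
  rw [tensorRightSMul_def, TensorProduct.comm_tmul, TensorProduct.smul_tmul',
    TensorProduct.comm_symm_tmul]

/-- The `K`-linear functional on `C ⊗_ℤ V` given by `c ⊗ v ↦ B (f c) v`. -/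
noncomputable def tensorPairing (B : LinearMap.BilinForm K V) (f : C →+ V) :
    Module.Dual K (C ⊗[ℤ] V) where
  __ := TensorProduct.liftAddHom
    (AddMonoidHom.mk' (fun c => (B (f c)).toAddMonoidHom) fun c d => by ext v; simp)
    fun n c v => by simp
  map_smul' k x := by
    induction x with
    | zero => simp
    | add x y hx hy => simp_all [mul_add]
    | tmul c v => simp [tensorRight_smul_tmul]

@[simp]
theorem tensorPairing_tmul (B : LinearMap.BilinForm K V) (f : C →+ V) (c : C) (v : V) :
    tensorPairing B f (c ⊗ₜ[ℤ] v) = B (f c) v := rfl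

/-- Two functionals on a quotient of `C ⊗_ℤ V` agree if they agree on pure tensors. -/
theorem tensorRight_quotient_dual_ext {W : Submodule K (C ⊗[ℤ] V)}
    {φ ψ : Module.Dual K ((C ⊗[ℤ] V) ⧸ W)}
    (h : ∀ (c : C) (v : V), φ (Submodule.Quotient.mk (c ⊗ₜ[ℤ] v)) =
      ψ (Submodule.Quotient.mk (c ⊗ₜ[ℤ] v))) : φ = ψ := by
  ext x
  induction x with
  | zero => simp
  | add x y hx hy => simp_all
  | tmul c v => exact h c v

/-- The map `c ↦ (v ↦ φ (c ⊗ v))` attached to a functional `φ` on `C ⊗_ℤ V`. -/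
noncomputable def tensorCurry (φ : Module.Dual K (C ⊗[ℤ] V)) : C →+ Module.Dual K V where
  toFun c :=
    { toFun := fun v => φ (c ⊗ₜ[ℤ] v)
      map_add' := fun v w => by rw [TensorProduct.tmul_add, map_add]
      map_smul' := fun k v => by
        rw [← tensorRight_smul_tmul, map_smul, RingHom.id_apply] }
  map_zero' := by ext v; simp
  map_add' c d := by ext v; simp [TensorProduct.add_tmul]

end

section

variable {K V G : Type*} [Field K] [AddCommGroup V] [Module K V] [Group G]

@[simp]
theorem diagAction_tmul (ρ : G →* (V ≃ₗ[K] V)) {C : Type*} [AddCommGroup C]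
    [Module (MonoidAlgebra ℤ G) C] (g : G) (c : C) (v : V) :
    diagAction ρ C g (c ⊗ₜ[ℤ] v) = (MonoidAlgebra.of ℤ G g • c) ⊗ₜ[ℤ] ρ g v := rfl

variable {ρ ρd : G →* (V ≃ₗ[K] V)} {B : LinearMap.BilinForm K V}
  {C : Type*} [AddCommGroup C] [Module (MonoidAlgebra ℤ G) C]

/-- The pairing with an equivariant map is invariant under the diagonal action. -/
theorem tensorPairing_diagAction (hdual : ∀ (g : G) (v w : V), B (ρd g v) (ρ g w) = B v w)
    {f : C →+ V} (hf : f ∈ equivariantMaps ρd C) (g : G) (x : C ⊗[ℤ] V) :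
    tensorPairing B f (diagAction ρ C g x) = tensorPairing B f x := by
  induction x with
  | zero => simp
  | add x y hx hy => simp_all
  | tmul c v => rw [diagAction_tmul, tensorPairing_tmul, tensorPairing_tmul, hf g c, hdual]

/-- An additive map `C → V` whose pairing is invariant under the diagonal action is
equivariant for the dual representation. -/
theorem mem_equivariantMaps_of_invariant (hB : B.Nondegenerate)
    (hdual : ∀ (g : G) (v w : V), B (ρd g v) (ρ g w) = B v w) {f : C →+ V}
    (hf : ∀ (g : G) (c : C) (v : V),
      B (f (MonoidAlgebra.of ℤ G g • c)) (ρ g v) = B (f c) v) :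
    f ∈ equivariantMaps ρd C := by
  intro g c
  refine LinearMap.ker_eq_bot.mp hB.ker_eq_bot (LinearMap.ext fun w => ?_)
  obtain ⟨v, rfl⟩ := (ρ g).surjective w
  rw [hf, hdual]

/-- The linear map sending an equivariant map `f` to the functional on the coinvariants
induced by `c ⊗ v ↦ B (f c) v`. -/
noncomputable def equivariantMapsToDual
    (hdual : ∀ (g : G) (v w : V), B (ρd g v) (ρ g w) = B v w) :
    equivariantMaps ρd C →ₗ[K]
      Module.Dual K ((C ⊗[ℤ] V) ⧸ Submodule.span K
        {x : C ⊗[ℤ] V | ∃ (g : G) (y : C ⊗[ℤ] V), x = diagAction ρ C g y - y}) where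
  toFun f := Submodule.liftQ _ (tensorPairing B f.val) <| by
    rw [Submodule.span_le]
    rintro _ ⟨g, y, rfl⟩
    simp [tensorPairing_diagAction hdual f.property]
  map_add' f₁ f₂ := tensorRight_quotient_dual_ext fun c v => by
    simp [Submodule.liftQ_apply]
  map_smul' k f := tensorRight_quotient_dual_ext fun c v => by
    simp [Submodule.liftQ_apply]

theorem equivariantMapsToDual_mk_tmul
    (hdual : ∀ (g : G) (v w : V), B (ρd g v) (ρ g w) = B v w)
    (f : equivariantMaps ρd C) (c : C) (v : V) :
    equivariantMapsToDual hdual f (Submodule.Quotient.mk (c ⊗ₜ[ℤ] v)) = B (f.val c) v := rfl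

theorem equivariantMapsToDual_injective (hB : B.Nondegenerate)
    (hdual : ∀ (g : G) (v w : V), B (ρd g v) (ρ g w) = B v w) :
    Function.Injective (equivariantMapsToDual (C := C) hdual) := by
  intro f₁ f₂ h
  refine Subtype.ext (AddMonoidHom.ext fun c => ?_)
  refine LinearMap.ker_eq_bot.mp hB.ker_eq_bot (LinearMap.ext fun v => ?_)
  rw [← equivariantMapsToDual_mk_tmul hdual, h, equivariantMapsToDual_mk_tmul]

theorem equivariantMapsToDual_surjective [FiniteDimensional K V] (hB : B.Nondegenerate)
    (hdual : ∀ (g : G) (v w : V), B (ρd g v) (ρ g w) = B v w) :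
    Function.Surjective (equivariantMapsToDual (C := C) hdual) := by
  intro φ
  let f : C →+ V := (B.toDual hB).symm.toLinearMap.toAddMonoidHom.comp
    (tensorCurry (φ.comp (Submodule.mkQ _)))
  have hf (c : C) (v : V) : B (f c) v = φ (Submodule.Quotient.mk (c ⊗ₜ[ℤ] v)) :=
    LinearMap.BilinForm.apply_toDual_symm_apply (hB := hB) ..
  refine ⟨⟨f, mem_equivariantMaps_of_invariant hB hdual fun g c v => ?_⟩,
    tensorRight_quotient_dual_ext hf⟩
  rw [hf, hf, ← diagAction_tmul]
  exact congrArg φ ((Submodule.Quotient.eq _).mpr (Submodule.subset_span ⟨g, _, rfl⟩))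

end

/-- Let `B` be a nondegenerate bilinear form on a finite-dimensional `K`-vector space `V`,
`ρ : G → GL(V)` a representation and `ρ†` its `B`-dual representation.  Let `C` be a
finitely generated free left `ℤ[G]`-module.  Then the map sending an equivariant additive
map `f : C → V` (i.e. `f(g·c) = ρ†(g)(f(c))`) to the functional induced by
`c ⊗ v ↦ B(f(c), v)` is a well-defined `K`-linear isomorphism onto the dual of the
coinvariants `(C ⊗_ℤ V)_G`. -/
theorem equivariantMaps_equiv_dual_coinvariants
    {K V G : Type*} [Field K] [AddCommGroup V] [Module K V] [FiniteDimensional K V]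
    [Group G] (ρ ρd : G →* (V ≃ₗ[K] V)) (B : LinearMap.BilinForm K V)
    (hB : B.Nondegenerate)
    (hdual : ∀ (g : G) (v w : V), B (ρd g v) (ρ g w) = B v w)
    (C : Type*) [AddCommGroup C] [Module (MonoidAlgebra ℤ G) C]
    [Module.Finite (MonoidAlgebra ℤ G) C] [Module.Free (MonoidAlgebra ℤ G) C] :
    ∃ e : equivariantMaps ρd C ≃ₗ[K]
        Module.Dual K ((C ⊗[ℤ] V) ⧸ Submodule.span K
          {x : C ⊗[ℤ] V | ∃ (g : G) (y : C ⊗[ℤ] V), x = diagAction ρ C g y - y}),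
      ∀ (f : equivariantMaps ρd C) (c : C) (v : V),
        e f (Submodule.Quotient.mk (c ⊗ₜ[ℤ] v)) = B (f.val c) v := by
  exact ⟨LinearEquiv.ofBijective (equivariantMapsToDual hdual)
    ⟨equivariantMapsToDual_injective hB hdual, equivariantMapsToDual_surjective hB hdual⟩,
    equivariantMapsToDual_mk_tmul hdual⟩
end
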